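/- arXiv:2506.10827 — 2 statements merged into one kernel-verified Lean document; each statement's English description precedes it below -/
import Mathlib

section
/- Let (Q,m) be a regular local ring with residue field k, let x₁,…,x_d ∈ m be a regular sequence on Q, and let f₁,…,f_n be monomials on x (each f_j = ∏_l x_l^{(a_j)_l} with a_j ∈ ℕ^d, a_j ≠ 0) that minimally generate an ideal I ⊆ m² (i.e., the images of f₁,…,f_n form a k-basis of I/mI). If R = Q/I admits an embedded deformation of codimension c, then there exists a subset S ⊆ {1,…,n} with |S| = c such that: (i) for every i ∈ S and every j ∈ {1,…,n} with j ≠ i, the supports of f_i and f_j are disjoint; and (ii) the family (f_i)_{i∈S} is a regular sequence on Q/(f_j : j ∉ S), so that I = (f_j : j ∉ S) + (f_i : i ∈ S) exhibits an embedded deformation of codimension c defined by monomials. -/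
open RingTheory.Sequence IsLocalRing

/-- `Q` is a regular local ring: its maximal ideal is generated by `dim Q` many elements. -/
def IsRegularLocal (Q : Type*) [CommRing Q] [IsNoetherianRing Q] [IsLocalRing Q] : Prop :=
  ∃ s : Finset Q, Ideal.span (s : Set Q) = maximalIdeal Q ∧
    (s.card : WithBot (WithTop ℕ)) = ringKrullDim Q

/-- `R = Q/I` admits an embedded deformation of codimension `c`: there are an ideal `J ⊆ I`
and elements `g₁,…,g_c ∈ I` with `I = J + (g₁,…,g_c)` and `g₁,…,g_c` a regular sequence on
`Q/J`. -/
def HasEmbeddedDeformation {Q : Type*} [CommRing Q] (I : Ideal Q) (c : ℕ) : Prop :=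
  ∃ (J : Ideal Q) (g : Fin c → Q), J ≤ I ∧ (∀ i, g i ∈ I) ∧
    I = J ⊔ Ideal.span (Set.range g) ∧
    IsRegular (Q ⧸ J) (List.ofFn g)


def mon {Q : Type*} [CommRing Q] {d : ℕ} (x : Fin d → Q) (v : Fin d → ℕ) : Q := ∏ l, x l ^ v l

lemma mon_add {Q : Type*} [CommRing Q] {d : ℕ} (x : Fin d → Q) (v w : Fin d → ℕ) :
    mon x (v + w) = mon x v * mon x w := by
  simp [mon, pow_add, Finset.prod_mul_distrib]

lemma mon_single {Q : Type*} [CommRing Q] {d : ℕ} (x : Fin d → Q) (l : Fin d) (k : ℕ) :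
    mon x (Pi.single l k) = x l ^ k := by
  unfold mon
  rw [Finset.prod_eq_single l]
  · simp
  · intro b _ hb; simp [Pi.single_eq_of_ne hb]
  · simp

lemma mon_dvd {Q : Type*} [CommRing Q] {d : ℕ} (x : Fin d → Q) {v w : Fin d → ℕ} (h : v ≤ w) :
    mon x v ∣ mon x w := by
  obtain ⟨u, rfl⟩ := exists_add_of_le h
  rw [mon_add]; exact Dvd.intro _ rfl

lemma mon_sub_single {Q : Type*} [CommRing Q] {d : ℕ} (x : Fin d → Q) {v : Fin d → ℕ} {p : Fin d}
    (h : v p ≠ 0) : mon x v = x p * mon x (v - Pi.single p 1) := by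
  have h1 : Pi.single p 1 ≤ v := by
    intro l
    by_cases hl : l = p
    · subst hl; simp; omega
    · simp [Pi.single_eq_of_ne hl]
  conv_lhs => rw [← add_tsub_cancel_of_le h1]
  rw [mon_add, mon_single, pow_one]

lemma colon_step {Q : Type*} [CommRing Q] (XT K K0 K1 : Ideal Q) (y₀ y₁ : Q)
    (hK0K : K0 ≤ K) (hK0K1 : K0 ≤ K1) (hKle : K ≤ K0 ⊔ Ideal.span {y₀} * K1)
    (hxK1 : Ideal.span {y₀} * K1 ≤ K)
    (h2 : ∀ q, y₁ * q ∈ Ideal.span {y₀} ⊔ XT ⊔ K0 → q ∈ Ideal.span {y₀} ⊔ XT ⊔ K0)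
    (h0 : ∀ q, y₀ * q ∈ XT ⊔ K0 → q ∈ XT ⊔ K0)
    (h1 : ∀ q, y₁ * q ∈ XT ⊔ K1 → q ∈ XT ⊔ K1) (q : Q) (hq : y₁ * q ∈ XT ⊔ K) : q ∈ XT ⊔ K := by
  have hP2 : XT ⊔ K ≤ Ideal.span {y₀} ⊔ XT ⊔ K0 := by
    have e1 : Ideal.span {y₀} * K1 ≤ Ideal.span {y₀} := Ideal.mul_le_left
    have e2 : XT ≤ Ideal.span {y₀} ⊔ XT := le_sup_right
    have e3 : Ideal.span {y₀} ≤ Ideal.span {y₀} ⊔ XT := le_sup_left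
    have e4 : Ideal.span {y₀} ⊔ XT ≤ Ideal.span {y₀} ⊔ XT ⊔ K0 := le_sup_left
    have e5 : K0 ≤ Ideal.span {y₀} ⊔ XT ⊔ K0 := le_sup_right
    exact sup_le (e2.trans e4) (hKle.trans (sup_le e5 (e1.trans (e3.trans e4))))
  have hq2 := h2 _ (hP2 hq)
  rw [sup_assoc] at hq2
  obtain ⟨y, hy, s, hs, rfl⟩ := Submodule.mem_sup.1 hq2
  obtain ⟨r, rfl⟩ := Ideal.mem_span_singleton.1 hy
  have hsP : s ∈ XT ⊔ K := sup_le_sup_left hK0K _ hs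
  refine Ideal.add_mem _ ?_ hsP
  have hq3 : y₀ * (y₁ * r) ∈ XT ⊔ K := by
    have := Ideal.sub_mem _ hq (Ideal.mul_mem_left _ (y₁) hsP)
    convert this using 1; ring
  have hq4 : y₀ * (y₁ * r) ∈ (XT ⊔ K0) ⊔ Ideal.span {y₀} * K1 := by
    rw [sup_assoc]; exact sup_le_sup_left hKle _ hq3
  obtain ⟨y, hy, z, hz, hyz⟩ := Submodule.mem_sup.1 hq4
  obtain ⟨k, hk, rfl⟩ := Ideal.mem_span_singleton_mul.1 hz
  have h5 : y₁ * r - k ∈ XT ⊔ K0 := by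
    refine h0 _ ?_
    have : y₀ * (y₁ * r - k) = y := by linear_combination -hyz
    rwa [this]
  have h6 : y₁ * r ∈ XT ⊔ K1 := by
    have := Ideal.add_mem _ (sup_le_sup_left hK0K1 XT h5) (Ideal.mem_sup_right (S := XT) hk)
    simpa using this
  have h7 := h1 r h6
  obtain ⟨y', hy', z', hz', rfl⟩ := Submodule.mem_sup.1 h7
  rw [mul_add]
  refine Ideal.add_mem _ (Ideal.mem_sup_left (Ideal.mul_mem_left _ _ hy')) (Ideal.mem_sup_right (hxK1 ?_))
  exact Ideal.mul_mem_mul (Ideal.mem_span_singleton_self _) hz'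

/-- main colon lemma -/
lemma colon_var {Q : Type*} [CommRing Q] {d : ℕ} (x : Fin d → Q)
    (hbase : ∀ (T : Finset (Fin d)) (l : Fin d), l ∉ T → ∀ q, x l * q ∈ Ideal.span (x '' (T : Set (Fin d))) →
      q ∈ Ideal.span (x '' (T : Set (Fin d)))) (N : ℕ) :
    ∀ (T : Finset (Fin d)) (l : Fin d) (U : List (Fin d → ℕ)), (U.map (fun v => ∑ i, v i)).sum ≤ N →
      l ∉ T → (∀ v ∈ U, v l = 0) → (∀ v ∈ U, ∀ t ∈ T, v t = 0) →
      ∀ q, x l * q ∈ Ideal.span (x '' (T : Set (Fin d))) ⊔ Ideal.span (mon x '' {v | v ∈ U}) →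
        q ∈ Ideal.span (x '' (T : Set (Fin d))) ⊔ Ideal.span (mon x '' {v | v ∈ U}) := by
  induction N using Nat.strong_induction_on with
  | _ N ih =>
  intro T l U hN hlT hUl hUT q hq
  by_cases hU : ∃ v ∈ U, ∃ p, v p ≠ 0
  swap
  · push Not at hU
    by_cases hne : U = []
    · subst hne
      simp only [List.not_mem_nil, Set.ofPred_false, Set.image_empty, Ideal.span_empty, sup_bot_eq] at hq ⊢
      exact hbase T l hlT q hq
    · obtain ⟨v, hv⟩ := List.exists_mem_of_ne_nil U hne
      have : (1 : Q) ∈ Ideal.span (mon x '' {v | v ∈ U}) := by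
        refine Ideal.subset_span ⟨v, hv, ?_⟩
        simp [mon, hU v hv]
      have h1 := (Ideal.eq_top_iff_one _).2 this
      rw [h1]; simp
  obtain ⟨w, hw, p, hp⟩ := hU
  have hpl : p ≠ l := by rintro rfl; exact hp (hUl w hw)
  have hpT : p ∉ T := fun h => hp (hUT w hw p h)
  set U0 : List (Fin d → ℕ) := U.filter (fun v => v p = 0) with hU0
  set U1 : List (Fin d → ℕ) := U.map (fun v => v - Pi.single p 1) with hU1
  have hle : ∀ v : Fin d → ℕ, ∑ i, (v - Pi.single p 1 : Fin d → ℕ) i ≤ ∑ i, v i := fun v =>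
    Finset.sum_le_sum (fun i _ => by simp)
  have hlt : ∀ v : Fin d → ℕ, v p ≠ 0 → ∑ i, (v - Pi.single p 1 : Fin d → ℕ) i < ∑ i, v i := fun v hv =>
    Finset.sum_lt_sum (fun i _ => by simp) ⟨p, Finset.mem_univ _, by simp; omega⟩
  have hd0 : (U0.map (fun v => ∑ i, v i)).sum < (U.map (fun v => ∑ i, v i)).sum := by
    obtain ⟨s, t, rfl⟩ := List.append_of_mem hw
    have hs : ∀ s : List (Fin d → ℕ), ((s.filter (fun v => v p = 0)).map (fun v => ∑ i, v i)).sum ≤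
        (s.map (fun v => ∑ i, v i)).sum := fun s =>
      List.Sublist.sum_le_sum (List.Sublist.map _ (List.filter_sublist)) (by simp)
    have h1 := hs s
    have h2 := hs t
    have h3 : w p ≤ ∑ i, w i := Finset.single_le_sum (fun i _ => Nat.zero_le _) (Finset.mem_univ p)
    simp only [hU0, List.filter_append, List.filter_cons, hp, List.map_append, List.sum_append, List.map_cons, List.sum_cons]
    simp
    omega
  have hd1 : (U1.map (fun v => ∑ i, v i)).sum < (U.map (fun v => ∑ i, v i)).sum := by
    rw [hU1, List.map_map]
    exact List.sum_lt_sum _ _ (fun v _ => hle v) ⟨w, hw, hlt w hp⟩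
  have hU0U : ∀ v ∈ U0, v ∈ U ∧ v p = 0 := fun v hv => by simpa [hU0] using hv
  set XT := Ideal.span (x '' (T : Set (Fin d))) with hXT
  set K := Ideal.span (mon x '' {v | v ∈ U}) with hK
  set K0 := Ideal.span (mon x '' {v | v ∈ U0}) with hK0
  set K1 := Ideal.span (mon x '' {v | v ∈ U1}) with hK1
  have hK0K : K0 ≤ K := Ideal.span_mono (Set.image_mono (fun v hv => (hU0U v hv).1))
  have hK0K1 : K0 ≤ K1 := by
    refine Ideal.span_mono (Set.image_mono (fun v hv => ?_))
    refine List.mem_map.2 ⟨v, (hU0U v hv).1, ?_⟩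
    ext i
    by_cases hi : i = p
    · subst hi; simp [(hU0U v hv).2]
    · simp [Pi.single_eq_of_ne hi]
  have hKle : K ≤ K0 ⊔ Ideal.span {x p} * K1 := by
    refine Ideal.span_le.2 ?_
    rintro _ ⟨v, hv, rfl⟩
    by_cases hvp : v p = 0
    · exact Ideal.mem_sup_left (Ideal.subset_span ⟨v, by simp [hU0, hvp]; exact hv, rfl⟩)
    · refine Ideal.mem_sup_right ?_
      rw [mon_sub_single x hvp]
      exact Ideal.mul_mem_mul (Ideal.mem_span_singleton_self _)
        (Ideal.subset_span ⟨_, List.mem_map.2 ⟨v, hv, rfl⟩, rfl⟩)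
  have hxK1 : Ideal.span {x p} * K1 ≤ K := by
    rw [hK1, Ideal.span_mul_span', Ideal.span_le]
    rintro _ ⟨_, rfl, _, ⟨_, hv1, rfl⟩, rfl⟩
    obtain ⟨v, hv, rfl⟩ := List.mem_map.1 hv1
    by_cases hvp : v p = 0
    · have : v - Pi.single p 1 = v := by
        ext i
        by_cases hi : i = p
        · subst hi; simp [hvp]
        · simp [Pi.single_eq_of_ne hi]
      simp only [this]
      exact K.mul_mem_left _ (Ideal.subset_span ⟨v, hv, rfl⟩)
    · show x p * mon x (v - Pi.single p 1) ∈ K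
      rw [← mon_sub_single x hvp]
      exact Ideal.subset_span ⟨v, hv, rfl⟩
  have hins : Ideal.span (x '' ((insert p T : Finset (Fin d)) : Set (Fin d))) = Ideal.span {x p} ⊔ XT := by
    rw [Finset.coe_insert, Set.image_insert_eq, Ideal.span_insert]
  have h2 := ih _ (lt_of_lt_of_le hd0 hN) (insert p T) l U0 le_rfl
    (by simp [hpl.symm, hlT]) (fun v hv => hUl v (hU0U v hv).1)
    (fun v hv t ht => by
      rcases Finset.mem_insert.1 ht with rfl | ht
      · exact (hU0U v hv).2
      · exact hUT v (hU0U v hv).1 t ht)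
  have h0 := ih _ (lt_of_lt_of_le hd0 hN) T p U0 le_rfl hpT (fun v hv => (hU0U v hv).2)
    (fun v hv t ht => hUT v (hU0U v hv).1 t ht)
  have h1 := ih _ (lt_of_lt_of_le hd1 hN) T l U1 le_rfl hlT
    (fun v hv => by
      obtain ⟨v, hv', rfl⟩ := List.mem_map.1 hv
      simp [hUl v hv'])
    (fun v hv t ht => by
      obtain ⟨v, hv', rfl⟩ := List.mem_map.1 hv
      simp [hUT v hv' t ht])
  rw [hins] at h2
  exact colon_step XT K K0 K1 _ _ hK0K hK0K1 hKle hxK1 h2 h0 h1 q hq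

def PermReg {Q : Type*} [CommRing Q] {d : ℕ} (x : Fin d → Q) : Prop :=
  ∀ (T : Finset (Fin d)) (l : Fin d), l ∉ T → ∀ q, x l * q ∈ Ideal.span (x '' (T : Set (Fin d))) →
      q ∈ Ideal.span (x '' (T : Set (Fin d)))

lemma colon_var_set {Q : Type*} [CommRing Q] {d : ℕ} (x : Fin d → Q) (hb : PermReg x)
    (l : Fin d) (U : Set (Fin d → ℕ)) (hfin : U.Finite) (hU : ∀ v ∈ U, v l = 0) (q : Q)
    (hq : x l * q ∈ Ideal.span (mon x '' U)) : q ∈ Ideal.span (mon x '' U) := by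
  have h := colon_var x hb _ ∅ l hfin.toFinset.toList le_rfl (by simp) (by simpa using hU) (by simp) q
  have e : {v | v ∈ hfin.toFinset.toList} = U := by ext; simp
  rw [e] at h
  simpa using h (by simpa using hq)

lemma colon_mon_set {Q : Type*} [CommRing Q] {d : ℕ} (x : Fin d → Q) (hb : PermReg x)
    (U : Set (Fin d → ℕ)) (hfin : U.Finite) (N : ℕ) : ∀ u : Fin d → ℕ, ∑ i, u i = N →
    (∀ v ∈ U, ∀ l, u l = 0 ∨ v l = 0) → ∀ q : Q,
    mon x u * q ∈ Ideal.span (mon x '' U) → q ∈ Ideal.span (mon x '' U) := by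
  induction N with
  | zero =>
    intro u hu _ q hq
    have : u = 0 := by
      ext i; simpa using (Finset.sum_eq_zero_iff.1 hu) i (Finset.mem_univ i)
    subst this
    simpa [mon] using hq
  | succ N ih =>
    intro u hu hd q hq
    have : ∃ p, u p ≠ 0 := by
      by_contra hc
      push Not at hc
      simp [hc] at hu
    obtain ⟨p, hp⟩ := this
    rw [mon_sub_single x hp, mul_assoc] at hq
    have h1 := colon_var_set x hb p U hfin (fun v hv => (hd v hv p).resolve_left hp) _ hq
    refine ih _ ?_ (fun v hv l => ?_) q h1
    · have : ∑ i, (u - Pi.single p 1 : Fin d → ℕ) i + ∑ i, (Pi.single p 1 : Fin d → ℕ) i = ∑ i, u i := by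
        rw [← Finset.sum_add_distrib]
        refine Finset.sum_congr rfl fun i _ => ?_
        by_cases hi : i = p
        · subst hi; simp; omega
        · simp [Pi.single_eq_of_ne hi]
      rw [hu] at this
      simp only [Finset.sum_pi_single', Finset.mem_univ, if_true] at this
      omega
    · rcases hd v hv l with h | h
      · left; simp [h]
      · right; exact h

lemma mon_not_mem {Q : Type*} [CommRing Q] {d : ℕ} (x : Fin d → Q) (hb : PermReg x)
    (h1 : (1 : Q) ∉ Ideal.span (Set.range x)) (N : ℕ) : ∀ u : Fin d → ℕ, ∑ i, u i = N →
    mon x u ∉ Ideal.span (Set.range fun l => x l ^ (u l + 1)) := by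
  induction N with
  | zero =>
    intro u hu
    have : u = 0 := by
      ext i; simpa using (Finset.sum_eq_zero_iff.1 hu) i (Finset.mem_univ i)
    subst this
    simpa [mon] using h1
  | succ N ih =>
    intro u hu hmem
    have : ∃ p, u p ≠ 0 := by
      by_contra hc
      push Not at hc
      simp [hc] at hu
    obtain ⟨p, hp⟩ := this
    rw [mon_sub_single x hp] at hmem
    refine ih (u - Pi.single p 1) ?_ ?_
    · have : ∑ i, (u - Pi.single p 1 : Fin d → ℕ) i + ∑ i, (Pi.single p 1 : Fin d → ℕ) i = ∑ i, u i := by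
        rw [← Finset.sum_add_distrib]
        refine Finset.sum_congr rfl fun i _ => ?_
        by_cases hi : i = p
        · subst hi; simp; omega
        · simp [Pi.single_eq_of_ne hi]
      rw [hu] at this
      simp only [Finset.sum_pi_single', Finset.mem_univ, if_true] at this
      omega
    set U : Set (Fin d → ℕ) := (fun l => Pi.single l (u l + 1)) '' {l | l ≠ p} with hU
    have hUfin : U.Finite := (Set.toFinite _).image _
    have hle1 : Ideal.span (Set.range fun l => x l ^ (u l + 1)) ≤
        Ideal.span {x p ^ (u p + 1)} ⊔ Ideal.span (mon x '' U) := by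
      rw [Ideal.span_le]
      rintro _ ⟨l, rfl⟩
      by_cases hl : l = p
      · subst hl; exact Ideal.mem_sup_left (Ideal.mem_span_singleton_self _)
      · exact Ideal.mem_sup_right (Ideal.subset_span ⟨_, ⟨l, hl, rfl⟩, mon_single _ _ _⟩)
    obtain ⟨y, hy, z, hz, hyz⟩ := Submodule.mem_sup.1 (hle1 hmem)
    obtain ⟨r, rfl⟩ := Ideal.mem_span_singleton.1 hy
    have h2 : mon x (u - Pi.single p 1) - x p ^ (u p) * r ∈ Ideal.span (mon x '' U) := by
      refine colon_var_set x hb p U hUfin ?_ _ ?_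
      · rintro _ ⟨l, hl, rfl⟩
        exact Pi.single_eq_of_ne (Ne.symm hl) _
      · have : x p * (mon x (u - Pi.single p 1) - x p ^ (u p) * r) = z := by
          rw [pow_succ] at hyz
          linear_combination -hyz
        rwa [this]
    have hle2 : Ideal.span (mon x '' U) ≤
        Ideal.span (Set.range fun l => x l ^ ((u - Pi.single p 1 : Fin d → ℕ) l + 1)) := by
      rw [Ideal.span_le]
      rintro _ ⟨_, ⟨l, hl, rfl⟩, rfl⟩
      refine Ideal.subset_span ⟨l, ?_⟩
      rw [mon_single]
      simp [Pi.single_eq_of_ne hl]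
    have h3 : x p ^ (u p) * r ∈ Ideal.span (Set.range fun l => x l ^ ((u - Pi.single p 1 : Fin d → ℕ) l + 1)) := by
      refine Ideal.mul_mem_right _ _ (Ideal.subset_span ⟨p, ?_⟩)
      have : (u - Pi.single p 1 : Fin d → ℕ) p + 1 = u p := by simp; omega
      simp only [this]
    simpa using Ideal.add_mem _ (hle2 h2) h3

lemma mon_mem {Q : Type*} [CommRing Q] {d : ℕ} (x : Fin d → Q) (hb : PermReg x)
    (h1 : (1 : Q) ∉ Ideal.span (Set.range x)) (U : Set (Fin d → ℕ)) (u : Fin d → ℕ)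
    (hu : mon x u ∈ Ideal.span (mon x '' U)) : ∃ v ∈ U, v ≤ u := by
  by_contra hc
  push Not at hc
  have hle : Ideal.span (mon x '' U) ≤ Ideal.span (Set.range fun l => x l ^ (u l + 1)) := by
    rw [Ideal.span_le]
    rintro _ ⟨v, hv, rfl⟩
    have := hc v hv
    rw [Pi.le_def] at this
    push Not at this
    obtain ⟨l, hl⟩ := this
    refine Ideal.mem_of_dvd _ ((pow_dvd_pow (x l) hl).trans (Finset.dvd_prod_of_mem (fun l => x l ^ v l) (Finset.mem_univ l)))
      (Ideal.subset_span ⟨l, rfl⟩)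
  exact mon_not_mem x hb h1 _ u rfl (hle hu)

lemma isSMulRegular_quot_iff {R M : Type*} [CommRing R] [AddCommGroup M] [Module R M]
    (N : Submodule R M) (r : R) :
    IsSMulRegular (M ⧸ N) r ↔ ∀ m : M, r • m ∈ N → m ∈ N := by
  rw [isSMulRegular_iff_right_eq_zero_of_smul]
  constructor
  · intro h m hm
    rw [← Submodule.Quotient.mk_eq_zero]
    apply h
    rw [← Submodule.Quotient.mk_smul, Submodule.Quotient.mk_eq_zero]
    exact hm
  · intro h m hm
    obtain ⟨m, rfl⟩ := Submodule.Quotient.mk_surjective N m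
    rw [← Submodule.Quotient.mk_smul, Submodule.Quotient.mk_eq_zero] at hm
    rw [Submodule.Quotient.mk_eq_zero]
    exact h m hm

lemma mk_mem_smul_top {Q : Type*} [CommRing Q] (J A : Ideal Q) (q : Q) :
    (Ideal.Quotient.mk J q) ∈ (A • ⊤ : Submodule Q (Q ⧸ J)) ↔ q ∈ J ⊔ A := by
  have e : (A • ⊤ : Submodule Q (Q ⧸ J)) = Submodule.map (Submodule.mkQ J) A := by
    have h : (⊤ : Submodule Q (Q ⧸ J)) = Submodule.map (Submodule.mkQ J) ⊤ := by
      rw [Submodule.map_top, Submodule.range_mkQ]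
    rw [h, ← Submodule.map_smul'']
    simp
  rw [e]
  change Submodule.mkQ J q ∈ _ ↔ _
  rw [← Submodule.mem_comap, Submodule.comap_map_mkQ]

lemma isWeaklyRegular_quot_iff {Q : Type*} [CommRing Q] (J : Ideal Q) (rs : List Q) :
    IsWeaklyRegular (Q ⧸ J) rs ↔ ∀ (i : ℕ) (h : i < rs.length) (q : Q),
      rs[i] * q ∈ J ⊔ Ideal.ofList (rs.take i) → q ∈ J ⊔ Ideal.ofList (rs.take i) := by
  rw [isWeaklyRegular_iff]
  refine forall_congr' fun i => forall_congr' fun h => ?_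
  rw [isSMulRegular_quot_iff, Ideal.Quotient.mk_surjective.forall]
  refine forall_congr' fun q => ?_
  rw [← mk_mem_smul_top J _ q, ← mk_mem_smul_top J _ (rs[i] * q)]
  rfl

lemma permReg_of_isRegular {Q : Type*} [CommRing Q] [IsNoetherianRing Q] [IsLocalRing Q] {d : ℕ}
    (x : Fin d → Q) (hx : IsRegular Q (List.ofFn x)) : PermReg x := by
  intro T l hl q hq
  set L : List (Fin d) := T.toList ++ l :: ((insert l T)ᶜ).toList with hL
  have hnd : L.Nodup := by
    rw [hL, List.nodup_append]
    refine ⟨T.nodup_toList, ?_, ?_⟩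
    · rw [List.nodup_cons]
      exact ⟨by simp, Finset.nodup_toList _⟩
    · intro a ha b hb
      rintro rfl
      simp at ha hb
      rcases hb with rfl | hb
      · exact hl ha
      · exact hb.2 ha
  have hp : (List.finRange d).Perm L := by
    rw [List.perm_ext_iff_of_nodup (List.nodup_finRange d) hnd]
    intro a
    simp [hL]
    tauto
  have h2 : IsRegular Q (L.map x) := by
    refine IsLocalRing.isRegular_of_perm hx ?_
    rw [List.ofFn_eq_map]
    exact hp.map x
  have h3 := (isWeaklyRegular_iff Q _).1 h2.toIsWeaklyRegular T.toList.length (by simp [hL])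
  have e1 : (L.map x).take T.toList.length = T.toList.map x := by
    rw [← List.map_take, hL, List.take_left]
  have e2 : (L.map x)[T.toList.length]'(by simp [hL]) = x l := by
    simp [hL]
  rw [e1, e2, isSMulRegular_quot_iff] at h3
  have e3 : (Ideal.ofList (T.toList.map x) • ⊤ : Submodule Q Q) = Ideal.span (x '' (T : Set (Fin d))) := by
    rw [smul_eq_mul, Ideal.mul_top, Ideal.ofList]
    congr 1
    ext; simp
  rw [e3] at h3
  exact h3 q hq

lemma ofList_take_ofFn {Q : Type*} [CommRing Q] {c : ℕ} (g : Fin c → Q) (i : ℕ) :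
    Ideal.ofList ((List.ofFn g).take i) = Ideal.span (g '' {k | (k : ℕ) < i}) := by
  unfold Ideal.ofList
  congr 1
  ext y
  simp only [List.mem_take_iff_getElem, Set.mem_ofPred_eq, Set.mem_image]
  constructor
  · rintro ⟨j, hj, rfl⟩
    simp at hj
    exact ⟨⟨j, hj.2⟩, hj.1, by simp⟩
  · rintro ⟨k, hk, rfl⟩
    exact ⟨k, by simp [hk], by simp⟩

/-- coefficients are well defined mod `I` -/
lemma coeff_mem {Q : Type*} [CommRing Q] (J : Ideal Q) (c : ℕ) : ∀ (g : Fin c → Q),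
    (∀ (i : Fin c) (q : Q), g i * q ∈ J ⊔ Ideal.span (g '' {k | k < i}) →
      q ∈ J ⊔ Ideal.span (g '' {k | k < i})) →
    ∀ b : Fin c → Q, ∑ i, b i * g i ∈ J → ∀ i, b i ∈ J ⊔ Ideal.span (Set.range g) := by
  induction c with
  | zero => intro g _ b _ i; exact i.elim0
  | succ c ih =>
    intro g hg b hb
    set g' : Fin c → Q := fun i => g i.castSucc with hg'
    have him : ∀ i : Fin c, g '' {k | k < i.castSucc} = g' '' {k | k < i} := by
      intro i
      ext y
      constructor
      · rintro ⟨k, hk, rfl⟩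
        have hk' : (k : ℕ) < i := hk
        exact ⟨⟨k, by omega⟩, hk', rfl⟩
      · rintro ⟨k, hk, rfl⟩
        exact ⟨k.castSucc, hk, rfl⟩
    have hlast : g '' {k | k < Fin.last c} = Set.range g' := by
      ext y
      constructor
      · rintro ⟨k, hk, rfl⟩
        have hk' : (k : ℕ) < c := hk
        exact ⟨⟨k, hk'⟩, rfl⟩
      · rintro ⟨k, rfl⟩
        exact ⟨k.castSucc, Fin.castSucc_lt_last k, rfl⟩
    have hle : J ⊔ Ideal.span (Set.range g') ≤ J ⊔ Ideal.span (Set.range g) := by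
      refine sup_le_sup_left (Ideal.span_mono ?_) _
      rintro _ ⟨k, rfl⟩; exact ⟨_, rfl⟩
    rw [Fin.sum_univ_castSucc] at hb
    have h1 : b (Fin.last c) ∈ J ⊔ Ideal.span (Set.range g') := by
      have h := hg (Fin.last c) (b (Fin.last c))
      rw [hlast] at h
      apply h
      have hs : ∑ i : Fin c, b i.castSucc * g i.castSucc ∈ Ideal.span (Set.range g') :=
        Ideal.sum_mem _ fun i _ => Ideal.mul_mem_left _ _ (Ideal.subset_span ⟨i, rfl⟩)
      have := Ideal.sub_mem _ (Ideal.mem_sup_left (T := Ideal.span (Set.range g')) hb)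
        (Ideal.mem_sup_right (S := J) hs)
      convert this using 1
      ring
    obtain ⟨j, hj, s, hs, hjs⟩ := Submodule.mem_sup.1 h1
    obtain ⟨e, rfl⟩ := (Ideal.mem_span_range_iff_exists_fun).1 hs
    have h2 := ih g' (fun i q hq => by
      have := hg i.castSucc q
      rw [him] at this
      exact this hq) (fun i => b i.castSucc + e i * g (Fin.last c)) (by
        have := Ideal.sub_mem _ hb (Ideal.mul_mem_right (g (Fin.last c)) _ hj)
        convert this using 1
        rw [← hjs, add_mul, Finset.sum_mul]
        simp only [add_mul, Finset.sum_add_distrib]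
        rw [show ∑ i, e i * g (Fin.last c) * g' i = ∑ i, e i * g' i * g (Fin.last c) from
          Finset.sum_congr rfl fun i _ => by ring]
        ring)
    intro i
    refine Fin.lastCases (hle h1) (fun i => ?_) i
    have h3 := Ideal.sub_mem _ (hle (h2 i)) (Ideal.mem_sup_right (S := J)
      (Ideal.mul_mem_left _ (e i) (Ideal.subset_span (Set.mem_range_self (f := g) (Fin.last c)))))
    simpa using h3

lemma card_nonzero_rows {k : Type*} [Field k] {n c : ℕ} (D : Matrix (Fin c) (Fin n) k)
    (C : Matrix (Fin n) (Fin c) k) (h : D * C = 1) (T : Finset (Fin n))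
    (hT : ∀ j, j ∉ T → ∀ i, C j i = 0) : c ≤ T.card := by
  let φ : (Fin c → k) →ₗ[k] (T → k) :=
    { toFun := fun v t => (C.mulVec v) t
      map_add' := fun v w => by ext t; simp [Matrix.mulVec_add]
      map_smul' := fun r v => by ext t; simp [Matrix.mulVec_smul] }
  have hφ : Function.Injective φ := by
    rw [← LinearMap.ker_eq_bot, LinearMap.ker_eq_bot']
    intro v hv
    have h0 : C.mulVec v = 0 := by
      ext j
      by_cases hj : j ∈ T
      · exact congrFun hv ⟨j, hj⟩
      · simp [Matrix.mulVec, dotProduct, hT j hj]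
    have : (D * C).mulVec v = 0 := by rw [← Matrix.mulVec_mulVec, h0, Matrix.mulVec_zero]
    simpa [h] using this
  simpa using LinearMap.finrank_le_finrank_of_injective hφ

/-- Let `(Q,m)` be a regular local ring and `f₁,…,f_n` monomials on a regular sequence
`x₁,…,x_d ∈ m` (with nonzero exponent vectors `a_j`) minimally generating an ideal
`I ⊆ m²` (they generate `I`, and their images in `I/mI` are `k`-linearly independent, hence a
`k`-basis). If `R = Q/I` admits an embedded deformation of codimension `c`, then there is a
subset `S ⊆ {1,…,n}` with `|S| = c` such that (i) for `i ∈ S` and `j ≠ i` the supports of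
`f_i` and `f_j` are disjoint, and (ii) `(f_i)_{i∈S}` is a regular sequence on
`Q/(f_j : j ∉ S)`, with `I = (f_j : j ∉ S) + (f_i : i ∈ S)`: an embedded deformation of
codimension `c` defined by monomials. -/
theorem embedded_deformation_of_monomial_ring
    {Q : Type*} [CommRing Q] [IsNoetherianRing Q] [IsLocalRing Q]
    (hQ : IsRegularLocal Q)
    {d n : ℕ} (x : Fin d → Q) (hxm : ∀ l, x l ∈ maximalIdeal Q)
    (hx : IsRegular Q (List.ofFn x))
    (a : Fin n → Fin d → ℕ) (ha : ∀ j, a j ≠ 0)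
    (f : Fin n → Q) (hf : ∀ j, f j = ∏ l, x l ^ a j l)
    (I : Ideal Q) (hIm : I ≤ maximalIdeal Q ^ 2)
    (hgen : Ideal.span (Set.range f) = I)
    (hmin : ∀ q : Fin n → Q, (∑ j, q j * f j) ∈ maximalIdeal Q * I →
      ∀ j, q j ∈ maximalIdeal Q)
    (c : ℕ) (hdef : HasEmbeddedDeformation I c) :
    ∃ S : Finset (Fin n), S.card = c ∧
      (∀ i ∈ S, ∀ j : Fin n, j ≠ i → ∀ l, a i l = 0 ∨ a j l = 0) ∧
      I = Ideal.span (f '' {j : Fin n | j ∉ S}) ⊔ Ideal.span (f '' {i : Fin n | i ∈ S}) ∧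
      IsRegular (Q ⧸ Ideal.span (f '' {j : Fin n | j ∉ S}))
        ((S.sort (· ≤ ·)).map f) := by
  classical
  have hb : PermReg x := permReg_of_isRegular x hx
  have hxle : Ideal.span (Set.range x) ≤ maximalIdeal Q :=
    Ideal.span_le.2 (by rintro _ ⟨l, rfl⟩; exact hxm l)
  have h1 : (1 : Q) ∉ Ideal.span (Set.range x) := fun h =>
    (Ideal.ne_top_iff_one _).1 (maximalIdeal.isMaximal Q).ne_top (hxle h)
  have hfm : ∀ j, f j = mon x (a j) := hf
  have hIle : I ≤ maximalIdeal Q := hIm.trans (Ideal.pow_le_self two_ne_zero)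
  have hfI : ∀ j, f j ∈ I := fun j => hgen ▸ Ideal.subset_span ⟨j, rfl⟩
  -- minimality of the generators
  have hminle : ∀ k j, a k ≤ a j → k = j := by
    intro k j hkj
    by_contra hne
    obtain ⟨w, hw⟩ := mon_dvd x hkj
    rw [← hfm, ← hfm] at hw
    have h := hmin (Pi.single j 1 - Pi.single k w) (by
      have : ∑ i, (Pi.single j 1 - Pi.single k w : Fin n → Q) i * f i = 0 := by
        simp [sub_mul, Finset.sum_sub_distrib, Pi.single_apply, hw]
        ring
      rw [this]; exact Ideal.zero_mem _) j
    have hjk : j ≠ k := fun h => hne h.symm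
    simp [Pi.single_eq_of_ne hjk] at h
  obtain ⟨J, g, hJI, hgI, hIJ, hreg⟩ := hdef
  have hcoef : ∀ b : Fin c → Q, ∑ i, b i * g i ∈ J → ∀ i, b i ∈ I := by
    rw [hIJ]
    refine coeff_mem J c g fun i q hq => ?_
    have h := (isWeaklyRegular_quot_iff J _).1 hreg.toIsWeaklyRegular i (by simp) q
    rw [ofList_take_ofFn] at h
    simp only [List.getElem_ofFn, Fin.eta] at h
    exact h hq
  have hC : ∀ j, ∃ b : Fin c → Q, f j - ∑ i, b i * g i ∈ J := by
    intro j
    have h := hfI j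
    rw [hIJ] at h
    obtain ⟨p, hp, s, hs, hps⟩ := Submodule.mem_sup.1 h
    obtain ⟨b, rfl⟩ := Ideal.mem_span_range_iff_exists_fun.1 hs
    exact ⟨b, by rw [← hps]; simpa using hp⟩
  have hD : ∀ i, ∃ b : Fin n → Q, ∑ j, b j * f j = g i := by
    intro i
    have h := hgI i
    rw [← hgen] at h
    exact Ideal.mem_span_range_iff_exists_fun.1 h
  choose C hC using hC
  choose D hD using hD
  have hDC : ∀ i k, (∑ j, D i j * C j k) - (if i = k then 1 else 0) ∈ I := by
    intro i
    refine hcoef _ ?_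
    have hs : ∑ j, D i j * (f j - ∑ k, C j k * g k) ∈ J :=
      Ideal.sum_mem _ fun j _ => Ideal.mul_mem_left _ _ (hC j)
    have hs' := J.neg_mem hs
    convert hs' using 1
    simp only [mul_sub, Finset.sum_sub_distrib, hD, sub_mul, Finset.sum_mul, Finset.mul_sum]
    rw [Finset.sum_comm]
    simp [mul_assoc]
  -- the generators with a unit coefficient
  set T : Finset (Fin n) := Finset.univ.filter fun j => ∃ k, C j k ∉ maximalIdeal Q with hT
  have hcT : c ≤ T.card := by
    refine card_nonzero_rows (k := ResidueField Q) (Matrix.of fun i j => residue Q (D i j))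
      (Matrix.of fun j k => residue Q (C j k)) ?_ T ?_
    · ext i k
      have h := (residue_eq_zero_iff _).2 (hIle (hDC i k))
      rw [map_sub, map_sum, sub_eq_zero] at h
      simp only [Matrix.mul_apply, Matrix.of_apply, Matrix.one_apply]
      simp only [map_mul] at h
      rw [h]
      split_ifs <;> simp
    · intro j hj k
      simp only [hT, Finset.mem_filter, Finset.mem_univ, true_and, not_exists, not_not] at hj
      exact (residue_eq_zero_iff _).2 (hj k)
  have hdisj : ∀ i ∈ T, ∀ j : Fin n, j ≠ i → ∀ l, a i l = 0 ∨ a j l = 0 := by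
    intro i hi j hji l
    obtain ⟨k, hk⟩ := (Finset.mem_filter.1 hi).2
    have hadd : (a j - a i) + a i = (a i - a j) + a j := by
      ext t; simp only [Pi.add_apply, Pi.sub_apply]; omega
    have hrel : mon x (a j - a i) * f i = mon x (a i - a j) * f j := by
      rw [hfm, hfm, ← mon_add, ← mon_add, hadd]
    have hIk : mon x (a j - a i) * C i k - mon x (a i - a j) * C j k ∈ I := by
      refine hcoef (fun k => mon x (a j - a i) * C i k - mon x (a i - a j) * C j k) ?_ k
      have := J.sub_mem (J.mul_mem_left (mon x (a i - a j)) (hC j))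
        (J.mul_mem_left (mon x (a j - a i)) (hC i))
      convert this using 1
      simp only [sub_mul, Finset.sum_sub_distrib, mul_sub, Finset.mul_sum, mul_assoc]
      linear_combination hrel
    have hu : IsUnit (C i k) := by
      by_contra hc
      exact hk ((mem_maximalIdeal _).2 hc)
    set U : Set (Fin d → ℕ) := insert (a i - a j) (Set.range a) with hU
    have hIU : I ≤ Ideal.span (mon x '' U) := by
      rw [← hgen, Ideal.span_le]
      rintro _ ⟨t, rfl⟩
      exact Ideal.subset_span ⟨a t, Set.mem_insert_of_mem _ ⟨t, rfl⟩, (hfm t).symm⟩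
    have hmem : mon x (a j - a i) ∈ Ideal.span (mon x '' U) := by
      rw [← Ideal.mul_unit_mem_iff_mem _ hu]
      have h2 : mon x (a i - a j) * C j k ∈ Ideal.span (mon x '' U) :=
        Ideal.mul_mem_right _ _ (Ideal.subset_span ⟨_, Set.mem_insert _ _, rfl⟩)
      simpa using Ideal.add_mem _ (hIU hIk) h2
    obtain ⟨v, hv, hvle⟩ := mon_mem x hb h1 U _ hmem
    rcases hv with rfl | ⟨t, rfl⟩
    · exfalso
      refine hji (hminle i j fun t => ?_).symm
      have ht : a i t - a j t ≤ a j t - a i t := hvle t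
      show a i t ≤ a j t
      omega
    · have htj : t = j := hminle t j fun l => (hvle l).trans (by simp)
      subst htj
      have := hvle l
      simp only [Pi.sub_apply] at this
      omega
  obtain ⟨S, hST, hScard⟩ := Finset.exists_subset_card_eq hcT
  have hSd : ∀ i ∈ S, ∀ j : Fin n, j ≠ i → ∀ l, a i l = 0 ∨ a j l = 0 :=
    fun i hi => hdisj i (hST hi)
  refine ⟨S, hScard, hSd, ?_, ?_⟩
  · rw [← hgen, ← Ideal.span_union, ← Set.image_union, ← Set.image_univ]
    congr 2
    ext j
    simp [em']
  set J' := Ideal.span (f '' {j : Fin n | j ∉ S}) with hJ'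
  have hJ'le : J' ≤ maximalIdeal Q :=
    Ideal.span_le.2 (by rintro _ ⟨j, _, rfl⟩; exact hIle (hfI j))
  refine ⟨(isWeaklyRegular_quot_iff J' _).2 ?_, ?_⟩
  · intro i hi q hq
    rw [List.length_map] at hi
    set i₀ := (S.sort (· ≤ ·))[i] with hi₀
    have hi₀S : i₀ ∈ S := (Finset.mem_sort (· ≤ ·)).1 (List.getElem_mem hi)
    set V : Set (Fin n) := {j | j ∉ S} ∪ {j | j ∈ (S.sort (· ≤ ·)).take i} with hV
    have hVi : i₀ ∉ V := by
      rintro (h | h)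
      · exact h hi₀S
      · obtain ⟨t, ht, hte⟩ := List.mem_take_iff_getElem.1 h
        have := (List.Nodup.getElem_inj_iff (Finset.sort_nodup S (· ≤ ·))).1 hte
        omega
    have hideal : J' ⊔ Ideal.ofList (((S.sort (· ≤ ·)).map f).take i) =
        Ideal.span (mon x '' (a '' V)) := by
      rw [hJ', Ideal.ofList, ← Ideal.span_union, Set.image_image, hV, Set.image_union]
      simp only [← hfm]
      congr 2
      ext y
      simp [← List.map_take]
    rw [hideal] at hq ⊢
    rw [List.getElem_map, ← hi₀, hfm] at hq
    refine colon_mon_set x hb _ (Set.toFinite _) _ (a i₀) rfl ?_ q hq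
    rintro _ ⟨j, hj, rfl⟩ l
    exact hSd i₀ hi₀S j (fun h => hVi (h ▸ hj)) l
  · intro htop
    have h := (mk_mem_smul_top J' (Ideal.ofList ((S.sort (· ≤ ·)).map f)) 1).1
      (htop ▸ Submodule.mem_top)
    have hle : J' ⊔ Ideal.ofList ((S.sort (· ≤ ·)).map f) ≤ maximalIdeal Q := by
      refine sup_le hJ'le (Ideal.span_le.2 ?_)
      intro y hy
      obtain ⟨j, _, rfl⟩ := List.mem_map.1 hy
      exact hIle (hfI j)
    exact (Ideal.ne_top_iff_one _).1 (maximalIdeal.isMaximal Q).ne_top (hle h)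
end

section
/- Let k be a field, let Q = k[x₁,…,x_d] be a polynomial ring, and let S and T be disjoint subsets of {1,…,d}. Let I₁ be an ideal of Q generated by finitely many monomials involving only the variables x_l with l ∈ S, and let I₂ be an ideal generated by finitely many monomials involving only the variables x_l with l ∈ T. Then for every i ≥ 1, the Tor module Tor_i^Q(Q/I₁, Q/I₂) is zero. -/
open MvPolynomial CategoryTheory

open scoped TensorProduct

universe u

/-- Base change `N ↦ Q ⊗[B] N`. -/
noncomputable def bcFunctor (B Q : Type u) [CommRing B] [CommRing Q] [Algebra B Q] :
    ModuleCat.{u} B ⥤ ModuleCat.{u} Q where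
  obj N := ModuleCat.of Q (Q ⊗[B] N)
  map f := ModuleCat.ofHom (f.hom.baseChange Q)
  map_id N := by
    ext : 1
    simp
  map_comp f g := by
    ext : 1
    simp [LinearMap.baseChange_comp]

instance (B Q : Type u) [CommRing B] [CommRing Q] [Algebra B Q] :
    (bcFunctor B Q).Additive where
  map_add {X Y f g} := by
    ext : 1
    simp only [bcFunctor, ModuleCat.hom_add, LinearMap.baseChange_add]
    rfl

instance (B Q : Type u) [CommRing B] [CommRing Q] [Algebra B Q] :
    (bcFunctor B Q).PreservesProjectiveObjects where
  projective_obj {P} hP := by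
    have : Module.Projective B P := ModuleCat.projective_of_module_projective P
    exact (inferInstance : Projective (ModuleCat.of Q (Q ⊗[B] P)))

lemma bcFunctor_preservesHomology (B Q : Type u) [CommRing B] [CommRing Q] [Algebra B Q]
    [Module.Flat B Q] : (bcFunctor B Q).PreservesHomology := by
  apply Functor.preservesHomology_of_map_exact
  intro S hS
  rw [ShortComplex.ShortExact.moduleCat_exact_iff_function_exact] at hS ⊢
  exact Module.Flat.lTensor_exact Q hS

lemma tor_bc_isZero {B Q : Type u} [CommRing B] [CommRing Q] [Algebra B Q] [Module.Flat B Q]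
    (M : Type u) [AddCommGroup M] [Module Q M] [Module B M] [IsScalarTower B Q M]
    [Module.Flat B M] (N : ModuleCat.{u} B) (i : ℕ) :
    Limits.IsZero (((Tor (ModuleCat.{u} Q) (i + 1)).obj (ModuleCat.of Q M)).obj
      ((bcFunctor B Q).obj N)) := by
  have := bcFunctor_preservesHomology B Q
  let P := projectiveResolution N
  let P' := (bcFunctor B Q).mapProjectiveResolution P
  let F := (MonoidalCategory.tensoringLeft (ModuleCat.{u} Q)).obj (ModuleCat.of Q M)
  refine Limits.IsZero.of_iso ?_ (P'.isoLeftDerivedObj F (i + 1))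
  change Limits.IsZero (((F.mapHomologicalComplex _).obj P'.complex).homology (i + 1))
  rw [← HomologicalComplex.exactAt_iff_isZero_homology]
  rw [HomologicalComplex.exactAt_iff' _ (i + 2) (i + 1) i (by simp) (by simp)]
  have h := P.exact_succ i
  rw [ShortComplex.ShortExact.moduleCat_exact_iff_function_exact] at h ⊢
  have h2 := Module.Flat.lTensor_exact M h
  have key : ∀ {X Y : ModuleCat.{u} B} (f : X ⟶ Y) (z : M ⊗[Q] (Q ⊗[B] X)),
      TensorProduct.AlgebraTensorModule.cancelBaseChange B Q Q M Y
        ((f.hom.baseChange Q).lTensor M z) =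
      f.hom.lTensor M (TensorProduct.AlgebraTensorModule.cancelBaseChange B Q Q M X z) := by
    intro X Y f z
    exact (LinearMap.congr_fun
      (TensorProduct.AlgebraTensorModule.lTensor_comp_cancelBaseChange B Q Q (M := M) f.hom) z).symm
  change Function.Exact ((((P.complex.d (i+2) (i+1)).hom).baseChange Q).lTensor M)
    ((((P.complex.d (i+1) i).hom).baseChange Q).lTensor M)
  intro z
  rw [← (TensorProduct.AlgebraTensorModule.cancelBaseChange B Q Q M _).map_eq_zero_iff, key]
  refine (h2 _).trans ⟨?_, ?_⟩
  · rintro ⟨y, hy⟩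
    refine ⟨(TensorProduct.AlgebraTensorModule.cancelBaseChange B Q Q M _).symm y, ?_⟩
    apply (TensorProduct.AlgebraTensorModule.cancelBaseChange B Q Q M _).injective
    rw [key, LinearEquiv.apply_symm_apply]
    exact hy
  · rintro ⟨y, rfl⟩
    exact ⟨_, (key _ y).symm⟩

lemma tor_tensor_isZero {k A B Q : Type u} [Field k] [CommRing A] [CommRing B] [CommRing Q]
    [Algebra k A] [Algebra k B] [Algebra k Q] (e : B ⊗[k] A ≃ₐ[k] Q)
    (J₁ : Ideal A) (J₂ : Ideal B) (I₁ I₂ : Ideal Q)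
    (h₁ : I₁ = (J₁.map (Algebra.TensorProduct.includeRight : A →ₐ[k] B ⊗[k] A)).map e)
    (h₂ : I₂ = J₂.map
      ((e : B ⊗[k] A →ₐ[k] Q).comp (Algebra.TensorProduct.includeLeft : B →ₐ[k] B ⊗[k] A)))
    (i : ℕ) :
    Limits.IsZero (((Tor (ModuleCat.{u} Q) (i + 1)).obj (ModuleCat.of Q (Q ⧸ I₁))).obj
      (ModuleCat.of Q (Q ⧸ I₂))) := by
  let alg : Algebra B Q := ((e : B ⊗[k] A →ₐ[k] Q).comp
    (Algebra.TensorProduct.includeLeft : B →ₐ[k] B ⊗[k] A)).toRingHom.toAlgebra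
  let e' : B ⊗[k] A ≃ₐ[B] Q := AlgEquiv.ofRingEquiv (f := e.toRingEquiv) (fun b => rfl)
  have : Module.Flat B Q := Module.Flat.of_linearEquiv e'.symm.toLinearEquiv
  have : Module.Flat B (Q ⧸ I₁) :=
    Module.Flat.of_linearEquiv ((Algebra.TensorProduct.tensorQuotientEquiv (R := k) B A B J₁).trans
      (Ideal.quotientEquivAlg _ I₁ e' h₁)).symm.toLinearEquiv
  refine Limits.IsZero.of_iso
    (tor_bc_isZero (B := B) (Q ⧸ I₁) (ModuleCat.of B (B ⧸ J₂)) i) (Functor.mapIso _ ?_)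
  subst h₂
  exact LinearEquiv.toModuleIso (Ideal.qoutMapEquivTensorQout (R := B) Q (I := J₂))

/-- Let `Q = k[x₁,…,x_d]` and let `S`, `T` be disjoint subsets of the variables. If `I₁` is
generated by finitely many monomials involving only variables in `S`, and `I₂` by finitely
many monomials involving only variables in `T`, then `Tor_i^Q(Q/I₁, Q/I₂) = 0` for all
`i ≥ 1`. -/
theorem tor_vanishes_of_monomial_ideals_disjoint_variables
    {k : Type*} [Field k] {d : ℕ} (S T : Finset (Fin d)) (hST : Disjoint S T)
    {m₁ m₂ : ℕ} (a : Fin m₁ → Fin d → ℕ) (b : Fin m₂ → Fin d → ℕ)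
    (ha : ∀ i l, l ∉ S → a i l = 0) (hb : ∀ i l, l ∉ T → b i l = 0)
    (I₁ I₂ : Ideal (MvPolynomial (Fin d) k))
    (hI₁ : I₁ = Ideal.span (Set.range fun i => ∏ l, (X l : MvPolynomial (Fin d) k) ^ a i l))
    (hI₂ : I₂ = Ideal.span (Set.range fun i => ∏ l, (X l : MvPolynomial (Fin d) k) ^ b i l)) :
    ∀ i : ℕ, 1 ≤ i →
      Limits.IsZero
        (((Tor (ModuleCat (MvPolynomial (Fin d) k)) i).obj
            (ModuleCat.of (MvPolynomial (Fin d) k) (MvPolynomial (Fin d) k ⧸ I₁))).obj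
          (ModuleCat.of (MvPolynomial (Fin d) k) (MvPolynomial (Fin d) k ⧸ I₂))) := by
  intro i hi
  obtain ⟨i, rfl⟩ := Nat.exists_eq_add_of_le' hi
  let eσ : {l // ¬ l ∈ S} ⊕ {l // l ∈ S} ≃ Fin d :=
    (Equiv.sumComm _ _).trans (Equiv.sumCompl (fun l => l ∈ S))
  let e : MvPolynomial {l // ¬ l ∈ S} k ⊗[k] MvPolynomial {l // l ∈ S} k ≃ₐ[k]
      MvPolynomial (Fin d) k :=
    (MvPolynomial.tensorEquivSum k {l // ¬ l ∈ S} {l // l ∈ S} k).trans (renameEquiv k eσ)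
  have heR : ∀ l : {l // l ∈ S},
      e ((Algebra.TensorProduct.includeRight : _ →ₐ[k] _) (X l)) = X l.1 := by
    intro l
    simp [e, eσ]
  have heL : ∀ l : {l // ¬ l ∈ S},
      e ((Algebra.TensorProduct.includeLeft : _ →ₐ[k] _) (X l)) = X l.1 := by
    intro l
    simp [e, eσ]
  refine tor_tensor_isZero e
    (Ideal.span (Set.range fun i => ∏ l : {l // l ∈ S}, X l ^ a i l.1))
    (Ideal.span (Set.range fun i => ∏ l : {l // ¬ l ∈ S}, X l ^ b i l.1)) _ _ ?_ ?_ i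
  · rw [hI₁, Ideal.map_span, Ideal.map_span, ← Set.range_comp, ← Set.range_comp]
    congr 2
    funext j
    simp only [Function.comp_apply, map_prod, map_pow]
    rw [← Fintype.prod_subtype_mul_prod_subtype (fun l => l ∈ S)]
    rw [Finset.prod_eq_one (s := (Finset.univ : Finset {l // ¬ l ∈ S}))]
    · rw [mul_one]
      exact Finset.prod_congr (by ext; simp) fun l _ => by rw [heR]
    · intro l _
      rw [ha j l.1 l.2, pow_zero]
  · rw [hI₂, Ideal.map_span, ← Set.range_comp]
    congr 2
    funext j
    simp only [Function.comp_apply, map_prod, map_pow]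
    rw [← Fintype.prod_subtype_mul_prod_subtype (fun l => l ∈ S)]
    refine (congrArg₂ (· * ·) (Finset.prod_eq_one ?_) rfl).trans ?_
    · intro l _
      rw [hb j l.1 (Finset.disjoint_left.mp hST l.2), pow_zero]
    · refine (one_mul _).trans ?_
      exact Finset.prod_congr (by ext; simp) fun l _ => by
        rw [← heL]
        rfl
end
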